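/- Let Q(x₁,x₂,x₃) = ∑_{|α| = d} C_α x^α be a homogeneous real polynomial of degree d in 3 variables, and let D : H_d → {P, N, 0} be defined by D(α) = P if C_α > 0, D(α) = 0 if C_α = 0, and D(α) = N if C_α < 0. Then D is a 2-dimensional symmetric diagram and the polynomial P(x₁,x₂,x₃) = (x₁ + x₂ + x₃)·Q(x₁,x₂,x₃) has at least #(D) monomials with nonzero coefficient. -/

import Mathlib

/-!
The coefficient of `(x₁ + x₂ + x₃) Q` at `α` is the sum of the coefficients of `Q` at the three
points below `α` (`coeffZ_sum_X_mul`). At a node these three numbers are not all zero and no two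
have opposite signs, so the sum is nonzero (`sum_ne_zero_of_symmNode`). Since nodes lie in the
positive quadrant, distinct nodes thus give distinct monomials of the product.
-/

open MvPolynomial

/-- `N(p)`: the number of monomials of `p` with nonzero coefficient. -/
def Nmon {n : ℕ} (p : MvPolynomial (Fin n) ℝ) : ℕ := p.support.card

/-- `down_k`: subtract `1` from the `k`-th entry. -/
def downk {n : ℕ} (k : Fin n) (α : Fin n → ℤ) : Fin n → ℤ :=
  Function.update α k (α k - 1)

/-- The coefficient of `q` at a point of `ℤⁿ` (zero off the positive quadrant). -/
noncomputable def coeffZ {n : ℕ} (q : MvPolynomial (Fin n) ℝ)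
    (α : Fin n → ℤ) : ℝ :=
  if ∀ i, 0 ≤ α i then
    q.coeff (Finsupp.equivFunOnFinite.symm fun i => (α i).toNat)
  else 0

/-- The diagram of the coefficients of `q`: `P`, `0`, or `N` according to the
sign of the coefficient. -/
noncomputable def newton {n : ℕ} (q : MvPolynomial (Fin n) ℝ) :
    (Fin n → ℤ) → SignType :=
  fun α => SignType.sign (coeffZ q α)

/-- A symmetric node of a 2-dimensional symmetric diagram: `D` is nonzero on at
least one of the three points below `α`, and does not take both values `P` and
`N` on them. -/
def SymmNode (D : (Fin 3 → ℤ) → SignType) (α : Fin 3 → ℤ) : Prop :=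
  (∃ k, D (downk k α) ≠ 0) ∧
  ¬ ∃ k m, D (downk k α) = 1 ∧ D (downk m α) = -1

/-- Multiplication by `x₁ + ⋯ + xₙ` adds up the coefficients at the points below `α`. A point
`downk k α` off the positive quadrant has `α k = 0`, where the `k`-th terms of both sums vanish. -/
theorem coeffZ_sum_X_mul {n : ℕ} (q : MvPolynomial (Fin n) ℝ) (α : Fin n → ℤ)
    (hα : ∀ i, 0 ≤ α i) :
    coeffZ ((∑ i, X i) * q) α = ∑ k, coeffZ q (downk k α) := by
  rw [coeffZ, if_pos hα, Finset.sum_mul, coeff_sum]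
  refine Finset.sum_congr rfl fun k _ => ?_
  rw [coeff_X_mul', coeffZ]
  by_cases hk : α k = 0
  · rw [if_neg (by simp [hk]), if_neg]
    intro h
    have := h k
    simp [downk, hk] at this
  · have hpos : 0 < α k := lt_of_le_of_ne (hα k) (Ne.symm hk)
    rw [if_pos (by simp; omega), if_pos]
    · congr 1
      ext i
      by_cases hi : i = k
      · subst hi
        simp [downk]
      · simp [downk, hi]
    · intro i
      by_cases hi : i = k
      · subst hi
        simp [downk]
        omega
      · simpa [downk, hi] using hα i

theorem coeffZ_ne_zero_nonneg {n : ℕ} {q : MvPolynomial (Fin n) ℝ} {α : Fin n → ℤ}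
    (h : coeffZ q α ≠ 0) (i : Fin n) : 0 ≤ α i := by
  by_contra hi
  exact h (if_neg fun hα => hi (hα i))

theorem nonneg_of_symmNode {q : MvPolynomial (Fin 3) ℝ} {α : Fin 3 → ℤ}
    (h : SymmNode (newton q) α) (i : Fin 3) : 0 ≤ α i := by
  obtain ⟨⟨k, hk⟩, -⟩ := h
  have := coeffZ_ne_zero_nonneg (sign_ne_zero.mp hk) i
  by_cases hi : i = k
  · subst hi
    simp [downk] at this
    omega
  · simpa [downk, hi] using this

/-- The summands below a node share a weak sign and are not all zero, so they cannot cancel. -/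
theorem sum_ne_zero_of_symmNode {q : MvPolynomial (Fin 3) ℝ} {α : Fin 3 → ℤ}
    (h : SymmNode (newton q) α) : ∑ k, coeffZ q (downk k α) ≠ 0 := by
  obtain ⟨⟨k, hk⟩, hno⟩ := h
  have hk' : coeffZ q (downk k α) ≠ 0 := sign_ne_zero.mp hk
  simp only [newton, sign_eq_one_iff, sign_eq_neg_one_iff] at hno
  push Not at hno
  rcases lt_or_gt_of_ne hk' with hneg | hpos
  · refine (Finset.sum_neg' (fun m _ => ?_) ⟨k, Finset.mem_univ k, hneg⟩).ne
    by_contra! hm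
    exact absurd (hno m k hm) (not_le.mpr hneg)
  · exact (Finset.sum_pos' (fun m _ => hno k m hpos) ⟨k, Finset.mem_univ k, hpos⟩).ne'

/-- if `Q` is homogeneous of degree `d` in 3 variables and `D`
is the diagram of signs of its coefficients, then `D` is a 2-dimensional
symmetric diagram (supported on `H_d`), and `(x₁+x₂+x₃)·Q` has at least
`#(D)` monomials with nonzero coefficient. -/
theorem stmt11 (d : ℕ) (Q : MvPolynomial (Fin 3) ℝ) (hQ : Q.IsHomogeneous d) :
    (∀ α : Fin 3 → ℤ, newton Q α ≠ 0 →
      (∀ i, 0 ≤ α i) ∧ (∑ i, α i) = (d : ℤ)) ∧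
    Set.ncard {α : Fin 3 → ℤ | SymmNode (newton Q) α} ≤
      Nmon ((∑ i, X i) * Q) := by
  refine ⟨fun α hα => ?_, ?_⟩
  · have hne : coeffZ Q α ≠ 0 := sign_ne_zero.mp hα
    have hnn := coeffZ_ne_zero_nonneg hne
    refine ⟨hnn, ?_⟩
    rw [coeffZ, if_pos hnn] at hne
    have hdeg := hQ hne
    rw [Finsupp.weight_apply, Finsupp.sum_fintype _ _ (by simp)] at hdeg
    simp only [Pi.one_apply, smul_eq_mul, mul_one, Finsupp.equivFunOnFinite_symm_apply_apply] at hdeg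
    rw [← hdeg]
    push_cast
    exact Finset.sum_congr rfl fun i _ => (Int.toNat_of_nonneg (hnn i)).symm
  · rw [Nmon, ← Set.ncard_coe_finset]
    refine Set.ncard_le_ncard_of_injOn
      (fun α => Finsupp.equivFunOnFinite.symm fun i => (α i).toNat) ?_ ?_ (Finset.finite_toSet _)
    · intro α hα
      have hnn := nonneg_of_symmNode hα
      have hsum := sum_ne_zero_of_symmNode hα
      rw [← coeffZ_sum_X_mul Q α hnn, coeffZ, if_pos hnn] at hsum
      exact mem_support_iff.mpr hsum
    -- `Int.toNat` loses nothing on nodes, because they lie in the positive quadrant.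
    · intro α hα β hβ hαβ
      funext i
      have hi := congrFun (Finsupp.equivFunOnFinite.symm.injective hαβ) i
      have h1 := nonneg_of_symmNode hα i
      have h2 := nonneg_of_symmNode hβ i
      omega
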